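/- Let A ∈ ℂ^{n×n} be Hermitian positive definite with orthonormal eigenvectors w_1,…,w_n and corresponding eigenvalues λ_1 ≤ λ_2 ≤ … ≤ λ_n, and let 1 ≤ j ≤ k ≤ n. Let b = Σ_{i=j}^{k} c_i w_i with ‖b‖ = 1 (i.e., b has no contribution from eigenvectors with index outside {j,…,k}), let f be a Stieltjes function, and let m ≥ 1. Let V_m ∈ ℂ^{n×m} have orthonormal columns whose column space equals K_m(A,b), and let f_m := V_m f(V_m* A V_m) V_m* b. Then for every x ∈ K_m(A,b), ‖f(A)b − f_m‖ ≤ (1 + (λ_k/λ_j)²) ‖f(A)b − x‖. -/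

import Mathlib

open MeasureTheory Matrix ComplexOrder

/-- A Stieltjes function: `f z = ∫ 1/(z+t) dμ(t)` for `z > 0`, for a positive Borel
measure `μ` on `[0,∞)` with `∫ 1/(1+t) dμ(t) < ∞`. -/
def IsStieltjes (f : ℝ → ℝ) : Prop :=
  ∃ μ : Measure ℝ,
    MeasureTheory.IntegrableOn (fun t => (1 + t)⁻¹) (Set.Ici 0) μ ∧
    ∀ z : ℝ, 0 < z → f z = ∫ t in Set.Ici (0 : ℝ), (z + t)⁻¹ ∂μ

/-- The Krylov subspace `K_m(A,b) = span{b, Ab, …, A^{m-1} b}`. -/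
noncomputable def Krylov {n : ℕ} (A : Matrix (Fin n) (Fin n) ℂ)
    (b : EuclideanSpace ℂ (Fin n)) (m : ℕ) : Submodule ℂ (EuclideanSpace ℂ (Fin n)) :=
  Submodule.span ℂ {v | ∃ i < m, v = Matrix.toEuclideanLin (A ^ i) b}

/-!
Let `θ₁, …, θₘ` be the eigenvalues of the compression `T = Vᴴ A V` and `ω(z) = ∏ᵢ (θᵢ - z)`.
Newton interpolation of the Stieltjes function `f` at the `θᵢ` leaves a remainder `ω g` in which
`g` is again a Stieltjes function. The interpolating polynomial reproduces the Lanczos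
approximation exactly, so the error is `g(A) u` with `u = ω(A) b`, and `u` is orthogonal to the
Krylov space because `ω(T) = 0`. On the interval `[α, β]` carrying the spectral content of `b`,
`g` takes values in `[g(β), g(α)]`, and `g(α) ≤ (β / α) g(β)` because `z g(z)` is increasing. Thus
`‖g(A) u‖ ≤ (β / α) g(β) ‖u‖`, while testing `f(A) b - x` against `u` gives
`g(β) ‖u‖ ≤ ‖f(A) b - x‖` for every `x` in the Krylov space.
-/

/-! ### Stieltjes functions -/

section Stieltjes

variable {μ : Measure ℝ}

theorem integrableOn_inv_add (hμ : IntegrableOn (fun t => (1 + t)⁻¹) (Set.Ici 0) μ) {z : ℝ}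
    (hz : 0 < z) : IntegrableOn (fun t => (z + t)⁻¹) (Set.Ici 0) μ := by
  refine Integrable.mono' (hμ.const_mul (1 + z⁻¹)) (by fun_prop) ?_
  filter_upwards [ae_restrict_mem measurableSet_Ici] with t (ht : 0 ≤ t)
  have hzt : 0 < z + t := by positivity
  have ht1 : 0 < 1 + t := by positivity
  rw [Real.norm_of_nonneg (by positivity)]
  field_simp
  nlinarith [mul_pos hz hz]

theorem isStieltjes_setIntegral_mul (hμ : IntegrableOn (fun t => (1 + t)⁻¹) (Set.Ici 0) μ)
    {φ : ℝ → ℝ} (hφ : Measurable φ) {C : ℝ} (hφ0 : ∀ t, 0 ≤ t → 0 ≤ φ t)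
    (hφC : ∀ t, 0 ≤ t → φ t ≤ C) :
    IsStieltjes fun z => ∫ t in Set.Ici 0, φ t * (z + t)⁻¹ ∂μ := by
  have hφm : Measurable fun t => (φ t).toNNReal := hφ.real_toNNReal
  have hsmul (z : ℝ) : ∀ t ∈ Set.Ici (0 : ℝ),
      (φ t).toNNReal • (z + t)⁻¹ = φ t * (z + t)⁻¹ := fun t ht => by
    rw [NNReal.smul_def, Real.coe_toNNReal _ (hφ0 t ht), smul_eq_mul]
  refine ⟨μ.withDensity fun t => (φ t).toNNReal, ?_, fun z _ => ?_⟩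
  · rw [IntegrableOn, restrict_withDensity measurableSet_Ici,
      integrable_withDensity_iff_integrable_smul hφm]
    refine IntegrableOn.congr_fun (f := fun t => φ t * (1 + t)⁻¹) ?_
      (fun t ht => (hsmul 1 t ht).symm) measurableSet_Ici
    refine Integrable.bdd_mul (c := C) hμ hφ.aestronglyMeasurable ?_
    filter_upwards [ae_restrict_mem measurableSet_Ici] with t ht
    rw [Real.norm_of_nonneg (hφ0 t ht)]
    exact hφC t ht
  · rw [setIntegral_withDensity_eq_setIntegral_smul hφm _ measurableSet_Ici]
    exact (setIntegral_congr_fun measurableSet_Ici (hsmul z)).symm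

end Stieltjes

open Polynomial in
theorem degree_prod_C_sub_X_le {R ι : Type*} [CommRing R] (s : Finset ι) (θ : ι → R) :
    (∏ i ∈ s, (C (θ i) - X)).degree ≤ (s.card : WithBot ℕ) := by
  have hfactor (i : ι) : (C (θ i) - X).degree ≤ 1 :=
    (degree_sub_le _ _).trans (max_le (degree_C_le.trans zero_le_one) degree_X_le)
  simpa using (degree_prod_le s _).trans (Finset.sum_le_card_nsmul s _ 1 fun i _ => hfactor i)

namespace IsStieltjes

open Polynomial

variable {f : ℝ → ℝ}

theorem nonneg (hf : IsStieltjes f) {z : ℝ} (hz : 0 < z) : 0 ≤ f z := by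
  obtain ⟨μ, -, hfμ⟩ := hf
  rw [hfμ z hz]
  exact setIntegral_nonneg measurableSet_Ici fun t ht => inv_nonneg.2 (add_nonneg hz.le ht)

theorem antitoneOn (hf : IsStieltjes f) : AntitoneOn f (Set.Ioi 0) := by
  intro y (hy : 0 < y) z (hz : 0 < z) hyz
  obtain ⟨μ, hμ, hfμ⟩ := hf
  rw [hfμ y hy, hfμ z hz]
  refine setIntegral_mono_on (integrableOn_inv_add hμ hz) (integrableOn_inv_add hμ hy)
    measurableSet_Ici fun t (ht : 0 ≤ t) => ?_
  gcongr

theorem monotoneOn_id_mul (hf : IsStieltjes f) : MonotoneOn (fun z => z * f z) (Set.Ioi 0) := by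
  intro y (hy : 0 < y) z (hz : 0 < z) hyz
  obtain ⟨μ, hμ, hfμ⟩ := hf
  simp only [hfμ y hy, hfμ z hz, ← integral_const_mul]
  refine setIntegral_mono_on ((integrableOn_inv_add hμ hy).const_mul y)
    ((integrableOn_inv_add hμ hz).const_mul z) measurableSet_Ici fun t (ht : 0 ≤ t) => ?_
  rw [← div_eq_mul_inv, ← div_eq_mul_inv, div_le_div_iff₀ (by positivity) (by positivity)]
  nlinarith

theorem apply_le_div_mul_apply (hf : IsStieltjes f) {α β : ℝ} (hα : 0 < α) (hαβ : α ≤ β) :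
    f α ≤ β / α * f β := by
  have hmono : α * f α ≤ β * f β := hf.monotoneOn_id_mul hα (hα.trans_le hαβ) hαβ
  rwa [div_mul_eq_mul_div, le_div_iff₀' hα]

theorem exists_eq_add_sub_mul (hf : IsStieltjes f) {θ : ℝ} (hθ : 0 < θ) :
    ∃ g, IsStieltjes g ∧ ∀ z, 0 < z → f z = f θ + (θ - z) * g z := by
  obtain ⟨μ, hμ, hfμ⟩ := hf
  refine ⟨_, isStieltjes_setIntegral_mul hμ (φ := fun t => (θ + t)⁻¹) (C := θ⁻¹) (by fun_prop)
    (fun t ht => by positivity) (fun t ht => ?_), fun z hz => ?_⟩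
  · gcongr
    exact le_add_of_nonneg_right ht
  · rw [← sub_eq_iff_eq_add', hfμ z hz, hfμ θ hθ, ← integral_const_mul,
      ← integral_sub (integrableOn_inv_add hμ hz) (integrableOn_inv_add hμ hθ)]
    refine setIntegral_congr_fun measurableSet_Ici fun t (ht : 0 ≤ t) => ?_
    have hzt : z + t ≠ 0 := by positivity
    have hθt : θ + t ≠ 0 := by positivity
    field_simp
    ring

theorem exists_eq_eval_add_prod_mul (hf : IsStieltjes f) {ι : Type*} (s : Finset ι) {θ : ι → ℝ}
    (hθ : ∀ i ∈ s, 0 < θ i) :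
    ∃ p : ℝ[X], p.degree < s.card ∧ ∃ g, IsStieltjes g ∧
      ∀ z, 0 < z → f z = p.eval z + (∏ i ∈ s, (C (θ i) - X)).eval z * g z := by
  classical
  induction s using Finset.induction_on with
  | empty => exact ⟨0, by simp, f, hf, fun z _ => by simp⟩
  | insert i s hi ih =>
    rw [Finset.forall_mem_insert] at hθ
    obtain ⟨p, hp, g, hg, hfg⟩ := ih hθ.2
    obtain ⟨h, hh, hgh⟩ := hg.exists_eq_add_sub_mul hθ.1
    refine ⟨p + C (g (θ i)) * ∏ i ∈ s, (C (θ i) - X), ?_, h, hh, fun z hz => ?_⟩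
    · have hlt : (s.card : WithBot ℕ) < (insert i s).card := by
        exact_mod_cast Finset.card_lt_card (Finset.ssubset_insert hi)
      refine (degree_add_le _ _).trans_lt (max_lt (hp.trans hlt) (lt_of_le_of_lt ?_ hlt))
      rw [← smul_eq_C_mul]
      exact (degree_smul_le _ _).trans (degree_prod_C_sub_X_le s θ)
    · rw [hfg z hz, hgh z hz, Finset.prod_insert hi]
      simp only [eval_add, eval_mul, eval_sub, eval_C, eval_X]
      ring

end IsStieltjes

/-! ### Functions of Hermitian matrices -/

section HermitianMatrix

open Polynomial

variable {𝕜 ι : Type*} [RCLike 𝕜] [Fintype ι] [DecidableEq ι] {H : Matrix ι ι 𝕜}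
  {s : Set ℝ} {v : EuclideanSpace 𝕜 ι}

/-- The spectral subspace of `H` for the set `s`: the span of the eigenvectors of `H` whose
eigenvalues lie in `s`. A combination of the eigenvectors `w_j, …, w_k` of the theorem lies in the
one for the interval `[λ_j, λ_k]`. -/
noncomputable def spectralSubspace (H : Matrix ι ι 𝕜) (s : Set ℝ) :
    Submodule 𝕜 (EuclideanSpace 𝕜 ι) :=
  ⨆ l ∈ s, Module.End.eigenspace (toEuclideanLin H) (l : 𝕜)

theorem mem_spectralSubspace_of_apply_eq_smul {l : ℝ} (hl : l ∈ s)
    (h : toEuclideanLin H v = (l : 𝕜) • v) : v ∈ spectralSubspace H s :=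
  Submodule.mem_iSup_of_mem l (Submodule.mem_iSup_of_mem hl (Module.End.mem_eigenspace_iff.2 h))

theorem sum_smul_mem_spectralSubspace {κ : Type*} [Fintype κ] {w : κ → EuclideanSpace 𝕜 ι}
    {l : κ → ℝ} (hw : ∀ i, toEuclideanLin H (w i) = (l i : 𝕜) • w i) {c : κ → 𝕜}
    (hc : ∀ i, l i ∉ s → c i = 0) : ∑ i, c i • w i ∈ spectralSubspace H s := by
  refine Submodule.sum_mem _ fun i _ => ?_
  by_cases hi : l i ∈ s
  · exact Submodule.smul_mem _ _ (mem_spectralSubspace_of_apply_eq_smul hi (hw i))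
  · rw [hc i hi, zero_smul]
    exact Submodule.zero_mem _

variable (hH : H.IsHermitian)

theorem toEuclideanLin_eigenvectorBasis (i : ι) :
    toEuclideanLin H (hH.eigenvectorBasis i) = (hH.eigenvalues i : 𝕜) • hH.eigenvectorBasis i := by
  ext a
  simpa [toLpLin_apply] using congrFun (hH.mulVec_eigenvectorBasis i) a

theorem inner_eigenvectorBasis_eq_zero {i : ι} (hi : hH.eigenvalues i ∉ s)
    (hv : v ∈ spectralSubspace H s) : inner 𝕜 (hH.eigenvectorBasis i) v = 0 := by
  suffices hle : spectralSubspace H s ≤ (𝕜 ∙ hH.eigenvectorBasis i)ᗮ from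
    Submodule.mem_orthogonal_singleton_iff_inner_right.1 (hle hv)
  refine iSup₂_le fun l hl y hy => Submodule.mem_orthogonal_singleton_iff_inner_right.2 ?_
  have hne : (hH.eigenvalues i : 𝕜) ≠ l := fun h => hi (RCLike.ofReal_injective h ▸ hl)
  exact (isSymmetric_toEuclideanLin_iff.2 hH).orthogonalFamily_eigenspaces hne
    ⟨_, Module.End.mem_eigenspace_iff.2 (toEuclideanLin_eigenvectorBasis hH i)⟩ ⟨y, hy⟩

theorem mem_spectralSubspace_iff :
    v ∈ spectralSubspace H s ↔
      ∀ i, hH.eigenvalues i ∉ s → inner 𝕜 (hH.eigenvectorBasis i) v = 0 := by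
  refine ⟨fun hv i hi => inner_eigenvectorBasis_eq_zero hH hi hv, fun hv => ?_⟩
  rw [← hH.eigenvectorBasis.sum_repr' v]
  exact sum_smul_mem_spectralSubspace (toEuclideanLin_eigenvectorBasis hH) hv

theorem toEuclideanLin_cfc_eigenvectorBasis (f : ℝ → ℝ) (i : ι) :
    toEuclideanLin (hH.cfc f) (hH.eigenvectorBasis i) =
      (f (hH.eigenvalues i) : 𝕜) • hH.eigenvectorBasis i := by
  have hmulVec : hH.cfc f *ᵥ (hH.eigenvectorBasis i).ofLp =
      (f (hH.eigenvalues i) : 𝕜) • (hH.eigenvectorBasis i).ofLp := by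
    rw [IsHermitian.cfc, Unitary.conjStarAlgAut_apply, ← mulVec_mulVec, ← mulVec_mulVec,
      hH.star_eigenvectorUnitary_mulVec i, diagonal_mulVec_single,
      ← hH.eigenvectorUnitary_mulVec, ← mulVec_smul, ← Pi.single_smul, smul_eq_mul]
    rfl
  exact WithLp.ofLp_injective 2 hmulVec

theorem inner_eigenvectorBasis_cfc (f : ℝ → ℝ) (v : EuclideanSpace 𝕜 ι) (i : ι) :
    inner 𝕜 (hH.eigenvectorBasis i) (toEuclideanLin (hH.cfc f) v) =
      f (hH.eigenvalues i) * inner 𝕜 (hH.eigenvectorBasis i) v := by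
  have hcfc : (hH.cfc f).IsHermitian := hH.cfc_eq f ▸ cfc_predicate f H
  rw [← isSymmetric_toEuclideanLin_iff.2 hcfc, toEuclideanLin_cfc_eigenvectorBasis,
    inner_smul_left, RCLike.conj_ofReal]

theorem cfc_apply_mem_spectralSubspace (f : ℝ → ℝ) (hv : v ∈ spectralSubspace H s) :
    toEuclideanLin (hH.cfc f) v ∈ spectralSubspace H s := by
  rw [mem_spectralSubspace_iff hH] at hv ⊢
  intro i hi
  rw [inner_eigenvectorBasis_cfc, hv i hi, mul_zero]

theorem aeval_eq_cfc (p : ℝ[X]) : aeval H p = hH.cfc p.eval := by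
  rw [← hH.cfc_eq]
  exact (cfc_polynomial p H hH).symm

theorem aeval_eq_zero_of_eval_eigenvalues_eq_zero {p : ℝ[X]}
    (hp : ∀ i, p.eval (hH.eigenvalues i) = 0) : aeval H p = 0 := by
  have hcomp : (RCLike.ofReal ∘ p.eval ∘ hH.eigenvalues : ι → 𝕜) = 0 := by
    ext i
    simp [hp]
  rw [aeval_eq_cfc hH, IsHermitian.cfc, hcomp]
  simp

theorem cfc_eq_of_eqOn_eigenvalues {f g : ℝ → ℝ}
    (hfg : ∀ i, f (hH.eigenvalues i) = g (hH.eigenvalues i)) : hH.cfc f = hH.cfc g := by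
  rw [IsHermitian.cfc, IsHermitian.cfc, (funext hfg : f ∘ hH.eigenvalues = g ∘ hH.eigenvalues)]

theorem norm_cfc_apply_le {f : ℝ → ℝ} {M : ℝ} (hM : 0 ≤ M) (hf : ∀ l ∈ s, |f l| ≤ M)
    (hv : v ∈ spectralSubspace H s) : ‖toEuclideanLin (hH.cfc f) v‖ ≤ M * ‖v‖ := by
  refine (sq_le_sq₀ (norm_nonneg _) (by positivity)).1 ?_
  rw [mul_pow, ← hH.eigenvectorBasis.sum_sq_norm_inner_right,
    ← hH.eigenvectorBasis.sum_sq_norm_inner_right v, Finset.mul_sum]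
  refine Finset.sum_le_sum fun i _ => ?_
  rw [inner_eigenvectorBasis_cfc, norm_mul, mul_pow, RCLike.norm_ofReal]
  by_cases hi : hH.eigenvalues i ∈ s
  · gcongr
    exact hf _ hi
  · simp [inner_eigenvectorBasis_eq_zero hH hi hv]

theorem mul_norm_sq_le_re_inner_cfc_apply {f : ℝ → ℝ} {c : ℝ} (hf : ∀ l ∈ s, c ≤ f l)
    (hv : v ∈ spectralSubspace H s) :
    c * ‖v‖ ^ 2 ≤ RCLike.re (inner 𝕜 v (toEuclideanLin (hH.cfc f) v)) := by
  rw [← hH.eigenvectorBasis.sum_inner_mul_inner, map_sum,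
    ← hH.eigenvectorBasis.sum_sq_norm_inner_right v, Finset.mul_sum]
  refine Finset.sum_le_sum fun i _ => ?_
  rw [inner_eigenvectorBasis_cfc, mul_left_comm, RCLike.re_ofReal_mul, inner_mul_symm_re_eq_norm,
    norm_mul, norm_inner_symm v, ← sq]
  by_cases hi : hH.eigenvalues i ∈ s
  · gcongr
    exact hf _ hi
  · simp [inner_eigenvectorBasis_eq_zero hH hi hv]

theorem mul_norm_le_norm_of_inner_cfc_apply_eq {f : ℝ → ℝ} {c : ℝ} (hf : ∀ l ∈ s, c ≤ f l)
    (hv : v ∈ spectralSubspace H s) {y : EuclideanSpace 𝕜 ι}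
    (hy : inner 𝕜 v (toEuclideanLin (hH.cfc f) v) = inner 𝕜 v y) : c * ‖v‖ ≤ ‖y‖ := by
  rcases (norm_nonneg v).eq_or_lt with hv0 | hv0
  · rw [← hv0, mul_zero]
    exact norm_nonneg _
  refine le_of_mul_le_mul_left ?_ hv0
  calc ‖v‖ * (c * ‖v‖) = c * ‖v‖ ^ 2 := by ring
    _ ≤ RCLike.re (inner 𝕜 v (toEuclideanLin (hH.cfc f) v)) :=
      mul_norm_sq_le_re_inner_cfc_apply hH hf hv
    _ = RCLike.re (inner 𝕜 v y) := by rw [hy]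
    _ ≤ ‖v‖ * ‖y‖ := re_inner_le_norm _ _

include hH in
theorem mul_norm_sq_le_re_inner_apply {α : ℝ} (hs : s ⊆ Set.Ici α)
    (hv : v ∈ spectralSubspace H s) :
    α * ‖v‖ ^ 2 ≤ RCLike.re (inner 𝕜 v (toEuclideanLin H v)) := by
  have hid : hH.cfc id = H := (hH.cfc_eq id).symm.trans (cfc_id ℝ H hH)
  simpa only [hid] using mul_norm_sq_le_re_inner_cfc_apply hH (f := id) hs hv

theorem re_inner_eigenvectorBasis_apply (i : ι) :
    RCLike.re (inner 𝕜 (hH.eigenvectorBasis i) (toEuclideanLin H (hH.eigenvectorBasis i))) =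
      hH.eigenvalues i := by
  rw [toEuclideanLin_eigenvectorBasis hH, inner_smul_right, RCLike.re_ofReal_mul,
    inner_self_eq_norm_sq, hH.eigenvectorBasis.norm_eq_one, one_pow, mul_one]

end HermitianMatrix

theorem pos_of_posDef_of_apply_eq_smul {𝕜 ι : Type*} [RCLike 𝕜] [Fintype ι] [DecidableEq ι]
    {H : Matrix ι ι 𝕜} (hH : H.PosDef) {v : EuclideanSpace 𝕜 ι} (hv : v ≠ 0) {l : ℝ}
    (h : toEuclideanLin H v = (l : 𝕜) • v) : 0 < l := by
  by_contra hl
  have hmem : v ∈ spectralSubspace H (Set.Iic 0) :=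
    mem_spectralSubspace_of_apply_eq_smul (not_lt.1 hl) h
  rw [mem_spectralSubspace_iff hH.1] at hmem
  rw [← hH.1.eigenvectorBasis.sum_repr' v] at hv
  exact hv (Finset.sum_eq_zero fun i _ => by rw [hmem i (hH.eigenvalues_pos i).not_ge, zero_smul])

/-! ### The Lanczos approximation -/

section Lanczos

open Polynomial

variable {𝕜 ι κ : Type*} [RCLike 𝕜] [Fintype ι] [DecidableEq ι] [Fintype κ] [DecidableEq κ]

/-- The Lanczos approximation `f_m = V f(Vᴴ A V) Vᴴ b` to `f(A) b`. -/
noncomputable def lanczosApprox {A : Matrix ι ι 𝕜} (hA : A.IsHermitian) (V : Matrix ι κ 𝕜)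
    (f : ℝ → ℝ) (b : EuclideanSpace 𝕜 ι) : EuclideanSpace 𝕜 ι :=
  toEuclideanLin V
    (toEuclideanLin ((isHermitian_conjTranspose_mul_mul V hA).cfc f) (toEuclideanLin Vᴴ b))

theorem toEuclideanLin_aeval_apply (M : Matrix ι ι 𝕜) (p : ℝ[X]) (v : EuclideanSpace 𝕜 ι) :
    toEuclideanLin (aeval M p) v =
      ∑ i ∈ p.support, (p.coeff i : 𝕜) • toEuclideanLin (M ^ i) v := by
  rw [aeval_def, eval₂_eq_sum, sum_def, map_sum, LinearMap.sum_apply]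
  refine Finset.sum_congr rfl fun i _ => ?_
  rw [← Algebra.smul_def, ← algebraMap_smul 𝕜, map_smul, LinearMap.smul_apply,
    RCLike.algebraMap_eq_ofReal]

theorem inner_toEuclideanLin_right (M : Matrix ι κ 𝕜) (u : EuclideanSpace 𝕜 ι)
    (y : EuclideanSpace 𝕜 κ) :
    inner 𝕜 u (toEuclideanLin M y) = inner 𝕜 (toEuclideanLin Mᴴ u) y := by
  rw [toEuclideanLin_conjTranspose_eq_adjoint, LinearMap.adjoint_inner_left]

theorem toEuclideanLin_conjTranspose_mul_mul_apply (A : Matrix ι ι 𝕜) (V : Matrix ι κ 𝕜)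
    (y : EuclideanSpace 𝕜 κ) :
    toEuclideanLin (Vᴴ * A * V) y =
      toEuclideanLin Vᴴ (toEuclideanLin A (toEuclideanLin V y)) := by
  simp [toLpLin_apply]

theorem conjTranspose_apply_apply {V : Matrix ι κ 𝕜} (hV : Vᴴ * V = 1) (y : EuclideanSpace 𝕜 κ) :
    toEuclideanLin Vᴴ (toEuclideanLin V y) = y := by
  simp [toLpLin_apply, hV]

theorem apply_conjTranspose_apply_of_mem_range {V : Matrix ι κ 𝕜} (hV : Vᴴ * V = 1)
    {y : EuclideanSpace 𝕜 ι} (hy : y ∈ LinearMap.range (toEuclideanLin V)) :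
    toEuclideanLin V (toEuclideanLin Vᴴ y) = y := by
  obtain ⟨z, rfl⟩ := hy
  rw [conjTranspose_apply_apply hV]

omit [DecidableEq ι] in
theorem norm_toEuclideanLin_apply {V : Matrix ι κ 𝕜} (hV : Vᴴ * V = 1)
    (y : EuclideanSpace 𝕜 κ) : ‖toEuclideanLin V y‖ = ‖y‖ := by
  classical
  rw [@norm_eq_sqrt_re_inner 𝕜, inner_toEuclideanLin_right, conjTranspose_apply_apply hV,
    ← norm_eq_sqrt_re_inner]

theorem le_eigenvalues_conjTranspose_mul_mul {A : Matrix ι ι 𝕜} (hA : A.IsHermitian)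
    {V : Matrix ι κ 𝕜} (hV : Vᴴ * V = 1) {s : Set ℝ} {α : ℝ} (hs : s ⊆ Set.Ici α)
    (hrange : LinearMap.range (toEuclideanLin V) ≤ spectralSubspace A s) (i : κ) :
    α ≤ (isHermitian_conjTranspose_mul_mul V hA).eigenvalues i := by
  let hT := isHermitian_conjTranspose_mul_mul V hA
  have hRayleigh := mul_norm_sq_le_re_inner_apply hA hs
    (hrange (LinearMap.mem_range_self _ (hT.eigenvectorBasis i)))
  rwa [norm_toEuclideanLin_apply hV, hT.eigenvectorBasis.norm_eq_one, one_pow, mul_one,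
    ← inner_conj_symm, inner_toEuclideanLin_right, inner_conj_symm,
    ← toEuclideanLin_conjTranspose_mul_mul_apply, re_inner_eigenvectorBasis_apply] at hRayleigh

end Lanczos

section Krylov

open Polynomial

variable {n m : ℕ} {A : Matrix (Fin n) (Fin n) ℂ} {b : EuclideanSpace ℂ (Fin n)}

theorem pow_apply_mem_Krylov {i : ℕ} (hi : i < m) : toEuclideanLin (A ^ i) b ∈ Krylov A b m :=
  Submodule.subset_span ⟨i, hi, rfl⟩

theorem aeval_apply_mem_Krylov {p : ℝ[X]} (hp : p.degree < m) :
    toEuclideanLin (aeval A p) b ∈ Krylov A b m := by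
  rw [toEuclideanLin_aeval_apply]
  refine Submodule.sum_mem _ fun i hi => Submodule.smul_mem _ _ (pow_apply_mem_Krylov ?_)
  exact_mod_cast (le_degree_of_mem_supp i hi).trans_lt hp

theorem Krylov_le_spectralSubspace (hA : A.IsHermitian) {s : Set ℝ}
    (hb : b ∈ spectralSubspace A s) : Krylov A b m ≤ spectralSubspace A s := by
  refine Submodule.span_le.2 ?_
  rintro _ ⟨i, -, rfl⟩
  have hpow : A ^ i = hA.cfc (X ^ i : ℝ[X]).eval := by rw [← aeval_eq_cfc hA, aeval_X_pow]
  rw [hpow]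
  exact cfc_apply_mem_spectralSubspace hA _ hb

variable {V : Matrix (Fin n) (Fin m) ℂ} (hV : Vᴴ * V = 1)
  (hVK : LinearMap.range (toEuclideanLin V) = Krylov A b m)

include hV hVK

theorem conjTranspose_pow_apply {i : ℕ} (hi : i ≤ m) :
    toEuclideanLin Vᴴ (toEuclideanLin (A ^ i) b) =
      toEuclideanLin ((Vᴴ * A * V) ^ i) (toEuclideanLin Vᴴ b) := by
  induction i with
  | zero => simp
  | succ i ih =>
    have hmem : toEuclideanLin (A ^ i) b ∈ LinearMap.range (toEuclideanLin V) :=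
      hVK ▸ pow_apply_mem_Krylov hi
    rw [pow_succ', pow_succ', toLpLin_mul_same, toLpLin_mul_same, LinearMap.comp_apply,
      LinearMap.comp_apply, ← ih (Nat.le_of_succ_le hi), toEuclideanLin_conjTranspose_mul_mul_apply,
      apply_conjTranspose_apply_of_mem_range hV hmem]

theorem conjTranspose_aeval_apply {p : ℝ[X]} (hp : p.degree ≤ m) :
    toEuclideanLin Vᴴ (toEuclideanLin (aeval A p) b) =
      toEuclideanLin (aeval (Vᴴ * A * V) p) (toEuclideanLin Vᴴ b) := by
  rw [toEuclideanLin_aeval_apply, toEuclideanLin_aeval_apply, map_sum]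
  refine Finset.sum_congr rfl fun i hi => ?_
  rw [map_smul, conjTranspose_pow_apply hV hVK]
  exact_mod_cast (le_degree_of_mem_supp i hi).trans hp

theorem lanczosApprox_eval (hA : A.IsHermitian) {p : ℝ[X]} (hp : p.degree < m) :
    lanczosApprox hA V p.eval b = toEuclideanLin (aeval A p) b := by
  have hmem : toEuclideanLin (aeval A p) b ∈ LinearMap.range (toEuclideanLin V) :=
    hVK ▸ aeval_apply_mem_Krylov hp
  rw [lanczosApprox, ← aeval_eq_cfc, ← conjTranspose_aeval_apply hV hVK hp.le,
    apply_conjTranspose_apply_of_mem_range hV hmem]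

theorem inner_aeval_apply_eq_zero {p : ℝ[X]} (hp : p.degree ≤ m)
    (hpT : aeval (Vᴴ * A * V) p = 0) {y : EuclideanSpace ℂ (Fin n)} (hy : y ∈ Krylov A b m) :
    inner ℂ (toEuclideanLin (aeval A p) b) y = 0 := by
  obtain ⟨z, rfl⟩ := hVK ▸ hy
  rw [inner_toEuclideanLin_right, conjTranspose_aeval_apply hV hVK hp, hpT]
  simp

theorem exists_lanczos_error_eq (hA : A.IsHermitian) {s : Set ℝ} {α : ℝ} (hα : 0 < α)
    (hs : s ⊆ Set.Ici α) (hb : b ∈ spectralSubspace A s) {f : ℝ → ℝ} (hf : IsStieltjes f) :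
    ∃ g, IsStieltjes g ∧ ∃ u ∈ spectralSubspace A s, (∀ y ∈ Krylov A b m, inner ℂ u y = 0) ∧
      toEuclideanLin (hA.cfc f) b - lanczosApprox hA V f b = toEuclideanLin (hA.cfc g) u := by
  let hT := isHermitian_conjTranspose_mul_mul V hA
  have hθ (i : Fin m) : 0 < hT.eigenvalues i := hα.trans_le <|
    le_eigenvalues_conjTranspose_mul_mul hA hV hs (hVK ▸ Krylov_le_spectralSubspace hA hb) i
  obtain ⟨p, hp, g, hg, hfg⟩ := hf.exists_eq_eval_add_prod_mul Finset.univ fun i _ => hθ i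
  set ω : ℝ[X] := ∏ i, (C (hT.eigenvalues i) - X)
  have hωθ (i : Fin m) : ω.eval (hT.eigenvalues i) = 0 := by
    rw [eval_prod]
    exact Finset.prod_eq_zero (Finset.mem_univ i) (by simp)
  have hω : ω.degree ≤ m := by simpa using degree_prod_C_sub_X_le Finset.univ hT.eigenvalues
  rw [Finset.card_fin] at hp
  refine ⟨g, hg, toEuclideanLin (aeval A ω) b, ?_, fun y hy => inner_aeval_apply_eq_zero hV hVK hω
    (aeval_eq_zero_of_eval_eigenvalues_eq_zero hT hωθ) hy, ?_⟩
  · rw [aeval_eq_cfc hA]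
    exact cfc_apply_mem_spectralSubspace hA _ hb
  have hfp : hT.cfc f = hT.cfc p.eval := cfc_eq_of_eqOn_eigenvalues hT fun i => by
    rw [hfg _ (hθ i), hωθ, zero_mul, add_zero]
  have hfm : lanczosApprox hA V f b = toEuclideanLin (aeval A p) b := by
    rw [← lanczosApprox_eval hV hVK hA hp, lanczosApprox, lanczosApprox, hfp]
  rw [hfm, aeval_eq_cfc hA, aeval_eq_cfc hA]
  refine InnerProductSpace.ext_inner_left_basis hA.eigenvectorBasis.toBasis fun i => ?_
  simp only [OrthonormalBasis.coe_toBasis, inner_sub_right, inner_eigenvectorBasis_cfc]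
  by_cases hi : hA.eigenvalues i ∈ s
  · rw [hfg _ (hα.trans_le (hs hi))]
    push_cast
    ring
  · simp [inner_eigenvectorBasis_eq_zero hA hi hb]

theorem lanczos_near_instance_optimality_effective_general (hA : A.IsHermitian) {α β : ℝ}
    (hα : 0 < α) (hαβ : α ≤ β) (hb : b ∈ spectralSubspace A (Set.Icc α β)) {f : ℝ → ℝ}
    (hf : IsStieltjes f) {x : EuclideanSpace ℂ (Fin n)} (hx : x ∈ Krylov A b m) :
    ‖toEuclideanLin (hA.cfc f) b - lanczosApprox hA V f b‖ ≤
      β / α * ‖toEuclideanLin (hA.cfc f) b - x‖ := by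
  obtain ⟨g, hg, u, hu, huK, herr⟩ :=
    exists_lanczos_error_eq hV hVK hA hα Set.Icc_subset_Ici_self hb hf
  have hβ : 0 < β := hα.trans_le hαβ
  have hgβ (l : ℝ) (hl : l ∈ Set.Icc α β) : g β ≤ g l :=
    hg.antitoneOn (hα.trans_le hl.1) hβ hl.2
  have hgα (l : ℝ) (hl : l ∈ Set.Icc α β) : |g l| ≤ β / α * g β := by
    rw [abs_of_nonneg (hg.nonneg (hα.trans_le hl.1))]
    exact (hg.antitoneOn hα (hα.trans_le hl.1) hl.1).trans (hg.apply_le_div_mul_apply hα hαβ)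
  have hfmK : lanczosApprox hA V f b ∈ Krylov A b m := hVK ▸ LinearMap.mem_range_self _ _
  have hinner : inner ℂ u (toEuclideanLin (hA.cfc g) u) =
      inner ℂ u (toEuclideanLin (hA.cfc f) b - x) := by
    rw [← herr, inner_sub_right, inner_sub_right, huK _ hfmK, huK x hx]
  have hlower : g β * ‖u‖ ≤ ‖toEuclideanLin (hA.cfc f) b - x‖ :=
    mul_norm_le_norm_of_inner_cfc_apply_eq hA hgβ hu hinner
  have hκgβ : 0 ≤ β / α * g β := mul_nonneg (by positivity) (hg.nonneg hβ)
  calc ‖toEuclideanLin (hA.cfc f) b - lanczosApprox hA V f b‖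
      = ‖toEuclideanLin (hA.cfc g) u‖ := by rw [herr]
    _ ≤ β / α * g β * ‖u‖ := norm_cfc_apply_le hA hκgβ hgα hu
    _ = β / α * (g β * ‖u‖) := mul_assoc _ _ _
    _ ≤ β / α * ‖toEuclideanLin (hA.cfc f) b - x‖ := by gcongr

end Krylov

/-- **Remark 3.6 (effective condition number)**: if `b` only has contributions from the
eigenvectors `w_j, …, w_k` of the Hermitian positive definite matrix `A` (eigenvalues
ordered increasingly), then the Lanczos approximation `f_m = V f(V* A V) V* b` for a
Stieltjes function `f` satisfies
`‖f(A)b − f_m‖ ≤ (1 + (λ_k/λ_j)²) ‖f(A)b − x‖` for every `x ∈ K_m(A,b)`. -/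
theorem lanczos_near_instance_optimality_effective
    {n m : ℕ} (hm : 1 ≤ m)
    (A : Matrix (Fin n) (Fin n) ℂ) (hA : A.IsHermitian) (hApd : A.PosDef)
    -- orthonormal eigenvectors `w i` with eigenvalues `lam i`, ordered increasingly
    (lam : Fin n → ℝ) (w : Fin n → EuclideanSpace ℂ (Fin n))
    (hw : Orthonormal ℂ w)
    (heig : ∀ i, Matrix.toEuclideanLin A (w i) = (lam i : ℂ) • w i)
    (hmono : Monotone lam)
    (j k : Fin n) (hjk : j ≤ k)
    -- `b = ∑_{i=j}^{k} c_i w_i` with `‖b‖ = 1`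
    (c : Fin n → ℂ) (hc : ∀ i, (i < j ∨ k < i) → c i = 0)
    (b : EuclideanSpace ℂ (Fin n)) (hbdef : b = ∑ i, c i • w i) (hb : ‖b‖ = 1)
    (f : ℝ → ℝ) (hf : IsStieltjes f)
    (V : Matrix (Fin n) (Fin m) ℂ)
    (hVorth : Vᴴ * V = 1)
    (hVspan : LinearMap.range (Matrix.toEuclideanLin V) = Krylov A b m)
    (fm : EuclideanSpace ℂ (Fin n))
    (hfm : fm = Matrix.toEuclideanLin V
      (Matrix.toEuclideanLin ((Matrix.isHermitian_conjTranspose_mul_mul V hA).cfc f)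
        (Matrix.toEuclideanLin Vᴴ b)))
    (x : EuclideanSpace ℂ (Fin n)) (hx : x ∈ Krylov A b m) :
    ‖Matrix.toEuclideanLin (hA.cfc f) b - fm‖ ≤
      (1 + (lam k / lam j) ^ 2) * ‖Matrix.toEuclideanLin (hA.cfc f) b - x‖ := by
  have hlamj : 0 < lam j := pos_of_posDef_of_apply_eq_smul hApd (hw.ne_zero j) (heig j)
  have hbS : b ∈ spectralSubspace A (Set.Icc (lam j) (lam k)) :=
    hbdef ▸ sum_smul_mem_spectralSubspace heig fun i hi => hc i <| by
      contrapose! hi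
      exact ⟨hmono hi.1, hmono hi.2⟩
  have hκ : lam k / lam j ≤ 1 + (lam k / lam j) ^ 2 := by
    nlinarith [sq_nonneg (lam k / lam j - 1)]
  exact hfm ▸ (lanczos_near_instance_optimality_effective_general hVorth hVspan hA hlamj (hmono hjk)
    hbS hf hx).trans (mul_le_mul_of_nonneg_right hκ (norm_nonneg _))
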